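/- arXiv:2309.09188 — 2 statements merged into one kernel-verified Lean document; each statement's English description precedes it below -/
import Mathlib

section
/- Let G be a finite simple graph whose edge ideal I(G) ⊂ S has a linear resolution. Then v(I(G)^k) = 2k − 1 for all k ≥ 1. -/
open MvPolynomial

noncomputable section

variable (K : Type*) [Field K]

/-- The set of associated primes of `S/I`. -/
def assPrimes {σ : Type*} (I : Ideal (MvPolynomial σ K)) : Set (Ideal (MvPolynomial σ K)) :=
  associatedPrimes (MvPolynomial σ K) (MvPolynomial σ K ⧸ I)

/-- The v-number of `I` at a prime `p`:
`min {d : ∃ homogeneous f of degree d with (I : f) = p}`. -/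
def vNumberAt {σ : Type*} (I p : Ideal (MvPolynomial σ K)) : ℕ :=
  sInf {d | ∃ f : MvPolynomial σ K, f.IsHomogeneous d ∧ I.colon (Ideal.span {f}) = p}

/-- The v-number of `I`:
`min {d : ∃ homogeneous f of degree d with (I : f) ∈ Ass(I)}`. -/
def vNumber {σ : Type*} (I : Ideal (MvPolynomial σ K)) : ℕ :=
  sInf {d | ∃ f : MvPolynomial σ K, f.IsHomogeneous d ∧
    I.colon (Ideal.span {f}) ∈ assPrimes K I}

/-- The initial degree `α(I) = min {d : I_d ≠ 0}`. -/
def initialDegree {σ : Type*} (I : Ideal (MvPolynomial σ K)) : ℕ :=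
  sInf {d | ∃ f ∈ I, f ≠ 0 ∧ f.IsHomogeneous d}

/-- `I` has a `d`-linear (free) resolution: there is a free resolution
`⋯ → F_1 → F_0 → I → 0` in which `F_0` has a basis mapping to homogeneous generators of
degree `d` and all the syzygy matrices consist of homogeneous linear forms (so `F_i` is
generated in degree `d + i`).  This happens iff the minimal graded free resolution of `I`
is linear, i.e. `β_{i,j}(I) = 0` for `j ≠ i + d`. -/
def HasLinearResolution {σ : Type*} (I : Ideal (MvPolynomial σ K)) (d : ℕ) : Prop :=
  ∃ (b : ℕ → ℕ) (g : Fin (b 0) → MvPolynomial σ K)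
    (M : ∀ i : ℕ, Matrix (Fin (b i)) (Fin (b (i + 1))) (MvPolynomial σ K)),
    (∀ j, (g j).IsHomogeneous d) ∧
    Ideal.span (Set.range g) = I ∧
    (∀ i j l, ((M i) j l).IsHomogeneous 1) ∧
    (∀ v : Fin (b 0) → MvPolynomial σ K,
      (∑ j, v j * g j) = 0 ↔ ∃ w, (M 0).mulVec w = v) ∧
    (∀ (i : ℕ) (v : Fin (b (i + 1)) → MvPolynomial σ K),
      (M i).mulVec v = 0 ↔ ∃ w, (M (i + 1)).mulVec w = v)

/-- The edge ideal `I(G) = (x_i x_j : {i,j} ∈ E(G))` of a finite simple graph `G`. -/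
def edgeIdeal {n : ℕ} (G : SimpleGraph (Fin n)) : Ideal (MvPolynomial (Fin n) K) :=
  Ideal.span {f | ∃ i j, G.Adj i j ∧ f = X i * X j}


/-! ### Weighted order of monomials -/

lemma pow_weight {n : ℕ} (I : Ideal (MvPolynomial (Fin n) K)) (w : Fin n → ℕ) (d : ℕ)
    (hI : ∀ p ∈ I, ∀ m ∈ p.support, d ≤ ∑ i, w i * m i) (k : ℕ) :
    ∀ p ∈ I ^ k, ∀ m ∈ p.support, k * d ≤ ∑ i, w i * m i := by
  classical
  induction k with
  | zero => intro p _ m _; simp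
  | succ k ih =>
    intro p hp
    rw [pow_succ] at hp
    refine Submodule.mul_induction_on hp ?_ ?_
    · intro a ha b hb m hm
      obtain ⟨m1, h1, m2, h2, rfl⟩ := Finset.mem_add.1 (support_mul a b hm)
      have e1 := ih a ha m1 h1
      have e2 := hI b hb m2 h2
      simp only [Finsupp.add_apply, mul_add, Finset.sum_add_distrib]
      rw [add_mul, one_mul]
      exact add_le_add e1 e2
    · intro a b ha hb m hm
      rcases Finset.mem_union.1 (support_add hm) with h | h
      · exact ha m h
      · exact hb m h

lemma edge_mem {n : ℕ} (G : SimpleGraph (Fin n)) {x y : Fin n} (hxy : G.Adj x y) :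
    (X x * X y : MvPolynomial (Fin n) K) ∈ edgeIdeal K G :=
  Ideal.subset_span ⟨x, y, hxy, rfl⟩

lemma edgeIdeal_support {n : ℕ} (G : SimpleGraph (Fin n)) {p : MvPolynomial (Fin n) K}
    (hp : p ∈ edgeIdeal K G) {m : Fin n →₀ ℕ} (hm : m ∈ p.support) :
    ∃ i j, G.Adj i j ∧ Finsupp.single i 1 + Finsupp.single j 1 ≤ m := by
  have : edgeIdeal K G = Ideal.span ((fun s => monomial s (1 : K)) ''
      {s | ∃ i j, G.Adj i j ∧ s = Finsupp.single i 1 + Finsupp.single j 1}) := by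
    unfold edgeIdeal
    congr 1
    ext f
    constructor
    · rintro ⟨i, j, h, rfl⟩
      exact ⟨_, ⟨i, j, h, rfl⟩, by simp [X, monomial_mul]⟩
    · rintro ⟨_, ⟨i, j, h, rfl⟩, rfl⟩
      exact ⟨i, j, h, by simp [X, monomial_mul]⟩
  rw [this, mem_ideal_span_monomial_image] at hp
  obtain ⟨_, ⟨i, j, h, rfl⟩, hle⟩ := hp m hm
  exact ⟨i, j, h, hle⟩

lemma edgeIdeal_coeff {n : ℕ} (G : SimpleGraph (Fin n)) {p : MvPolynomial (Fin n) K}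
    (hp : p ∈ edgeIdeal K G) {u v : Fin n} (h : ¬ G.Adj u v) :
    coeff (Finsupp.single u 1 + Finsupp.single v 1) p = 0 := by
  by_contra hne
  obtain ⟨i, j, hij, hle⟩ := edgeIdeal_support K G hp (mem_support_iff.2 hne)
  have hij' := hij.ne
  have hi := hle i
  have hj := hle j
  simp only [Finsupp.add_apply, Finsupp.single_apply, if_true, if_neg hij', if_neg hij'.symm] at hi hj
  have h1 : u = i ∨ v = i := by
    by_contra hc; push Not at hc; simp [hc.1, hc.2] at hi
  have h2 : u = j ∨ v = j := by
    by_contra hc; push Not at hc; simp [hc.1, hc.2] at hj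
  rcases h1 with rfl | rfl <;> rcases h2 with rfl | rfl
  · exact hij' rfl
  · exact h hij
  · exact h hij.symm
  · exact hij' rfl

lemma edgeIdeal_degree {n : ℕ} (G : SimpleGraph (Fin n)) :
    ∀ p ∈ edgeIdeal K G, ∀ m ∈ p.support, 2 ≤ ∑ i, (1 : Fin n → ℕ) i * m i := by
  intro p hp m hm
  obtain ⟨i, j, hij, hle⟩ := edgeIdeal_support K G hp hm
  calc 2 = ∑ l, (1 : Fin n → ℕ) l * (Finsupp.single i 1 + Finsupp.single j 1 : Fin n →₀ ℕ) l := by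
        simp [Finset.sum_add_distrib, Finsupp.single_apply]
    _ ≤ _ := Finset.sum_le_sum fun l _ => Nat.mul_le_mul_left _ (hle l)

lemma edgeIdeal_cover {n : ℕ} (G : SimpleGraph (Fin n)) (x : Fin n)
    [DecidableRel G.Adj]
    (hx : ∀ u v, G.Adj u v → G.Adj x u ∨ G.Adj x v) :
    ∀ p ∈ edgeIdeal K G, ∀ m ∈ p.support, 1 ≤ ∑ i, (if G.Adj x i then 1 else 0) * m i := by
  intro p hp m hm
  obtain ⟨i, j, hij, hle⟩ := edgeIdeal_support K G hp hm
  have key : ∀ l, G.Adj x l → 1 ≤ m l → 1 ≤ ∑ i, (if G.Adj x i then 1 else 0) * m i := by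
    intro l hl h1
    calc 1 ≤ (if G.Adj x l then 1 else 0) * m l := by simpa [hl] using h1
      _ ≤ _ := Finset.single_le_sum (f := fun i => (if G.Adj x i then 1 else 0) * m i)
          (fun _ _ => Nat.zero_le _) (Finset.mem_univ l)
  have hi := hle i
  have hj := hle j
  simp only [Finsupp.add_apply, Finsupp.single_apply, if_true] at hi hj
  rcases hx i j hij with h | h
  · exact key i h (by omega)
  · exact key j h (by omega)

lemma isPrime_span_X {n : ℕ} (N : Set (Fin n)) :
    (Ideal.span (X '' N : Set (MvPolynomial (Fin n) K))).IsPrime := by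
  classical
  let φ : MvPolynomial (Fin n) K →ₐ[K] MvPolynomial (Fin n) K :=
    aeval (fun i => if i ∈ N then 0 else X i)
  have h1 : ∀ p, p - φ p ∈ Ideal.span (X '' N : Set (MvPolynomial (Fin n) K)) := by
    intro p
    induction p using MvPolynomial.induction_on with
    | C a => simp [φ]
    | add p q hp hq =>
      rw [map_add, add_sub_add_comm]; exact Ideal.add_mem _ hp hq
    | mul_X p i hp =>
      rw [map_mul]
      by_cases hi : i ∈ N
      · simp only [φ, aeval_X, hi, if_true, mul_zero, sub_zero]
        exact Ideal.mul_mem_left _ _ (Ideal.subset_span ⟨i, hi, rfl⟩)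
      · have : φ (X i) = X i := by simp [φ, hi]
        rw [this, ← sub_mul]
        exact Ideal.mul_mem_right _ _ hp
  have : Ideal.span (X '' N : Set (MvPolynomial (Fin n) K)) = RingHom.ker φ.toRingHom := by
    apply le_antisymm
    · rw [Ideal.span_le]
      rintro _ ⟨i, hi, rfl⟩
      simp [φ, RingHom.mem_ker, hi]
    · intro p hp
      have h2 : φ p = 0 := hp
      have := h1 p
      rwa [h2, sub_zero] at this
  rw [this]
  exact RingHom.ker_isPrime _

lemma colon_eq {n : ℕ} (G : SimpleGraph (Fin n)) (x y : Fin n) (hxy : G.Adj x y)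
    (hx : ∀ u v, G.Adj u v → G.Adj x u ∨ G.Adj x v) (k : ℕ) :
    ((edgeIdeal K G) ^ (k+1)).colon (Ideal.span {(X x * (X x * X y) ^ k : MvPolynomial (Fin n) K)})
      = Ideal.span (X '' {i | G.Adj x i}) := by
  classical
  ext p
  rw [Ideal.mem_colon_span_singleton]
  constructor
  · intro hp
    rw [mem_ideal_span_X_image]
    intro m hm
    by_contra hc
    push Not at hc
    have hf : (X x * (X x * X y) ^ k : MvPolynomial (Fin n) K)
        = monomial (Finsupp.single x 1 + k • (Finsupp.single x 1 + Finsupp.single y 1)) 1 := by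
      simp [X, monomial_mul, monomial_pow]
    rw [hf] at hp
    have := pow_weight K _ _ 1 (edgeIdeal_cover K G x hx) (k+1) _ hp
      (m + (Finsupp.single x 1 + k • (Finsupp.single x 1 + Finsupp.single y 1)))
      (by rw [mem_support_iff, coeff_mul_monomial, mul_one]; exact mem_support_iff.1 hm)
    have h0 : ∑ i, (if G.Adj x i then 1 else 0) * m i = 0 := by
      apply Finset.sum_eq_zero
      intro i _
      by_cases hi : G.Adj x i
      · simp [hc i hi]
      · simp [hi]
    simp only [Finsupp.add_apply, mul_add, Finset.sum_add_distrib, h0, Finsupp.smul_apply] at this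
    simp [Finsupp.single_apply] at this
    refine absurd this (not_lt.2 ?_)
    calc _ ≤ ∑ i, (if y = i then k else 0) := by
          apply Finset.sum_le_sum
          intro i _
          by_cases hi : G.Adj x i
          · have := hi.ne
            simp [hi, this]
          · simp [hi]
      _ = k := by simp
  · intro hp
    have : Ideal.span (X '' {i | G.Adj x i}) ≤
        ((edgeIdeal K G) ^ (k+1)).colon
          (Ideal.span {(X x * (X x * X y) ^ k : MvPolynomial (Fin n) K)}) := by
      rw [Ideal.span_le]
      rintro _ ⟨i, hi, rfl⟩
      rw [SetLike.mem_coe, Ideal.mem_colon_span_singleton, ← mul_assoc, pow_succ']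
      exact Ideal.mul_mem_mul (Ideal.subset_span ⟨i, x, hi.symm, rfl⟩)
        (Ideal.pow_mem_pow (edge_mem K G hxy) k)
    exact Ideal.mem_colon_span_singleton.1 (this hp)

lemma vNumber_of_simplicial {n : ℕ} (G : SimpleGraph (Fin n)) (x y : Fin n) (hxy : G.Adj x y)
    (hx : ∀ u v, G.Adj u v → G.Adj x u ∨ G.Adj x v) (k : ℕ) (hk : 1 ≤ k) :
    vNumber K ((edgeIdeal K G) ^ k) = 2 * k - 1 := by
  have hmem : (2 * k - 1) ∈ {d | ∃ f : MvPolynomial (Fin n) K, f.IsHomogeneous d ∧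
      ((edgeIdeal K G) ^ k).colon (Ideal.span {f}) ∈ assPrimes K ((edgeIdeal K G) ^ k)} := by
    obtain ⟨k, rfl⟩ : ∃ l, k = l + 1 := ⟨k - 1, by omega⟩
    refine ⟨X x * (X x * X y) ^ k, ?_, ?_⟩
    · have := (isHomogeneous_X K x).mul
        (((isHomogeneous_X K x).mul (isHomogeneous_X K y)).pow k)
      convert this using 1
      omega
    · have hp := isPrime_span_X K {i | G.Adj x i}
      have hc := colon_eq K G x y hxy hx k
      rw [assPrimes, AssociatedPrimes.mem_iff, IsAssociatedPrime, Submodule.isAssociatedPrime_iff]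
      refine ⟨hc ▸ hp, Ideal.Quotient.mk _ (X x * (X x * X y) ^ k), ?_⟩
      ext p
      rw [Ideal.mem_colon_span_singleton, Submodule.mem_colon_singleton, Submodule.mem_bot,
        ← Ideal.Quotient.eq_zero_iff_mem, map_mul]
      rfl
  apply le_antisymm (Nat.sInf_le hmem)
  apply le_csInf ⟨_, hmem⟩
  rintro d ⟨f, hf, hass⟩
  have hprime : (((edgeIdeal K G) ^ k).colon (Ideal.span {f})).IsPrime := hass.1
  have hle : (X x * X y) ^ k ∈ ((edgeIdeal K G) ^ k).colon (Ideal.span {f}) := by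
    rw [Ideal.mem_colon_span_singleton]
    exact Ideal.mul_mem_right _ _ (Ideal.pow_mem_pow (edge_mem K G hxy) k)
  have hf0 : f ≠ 0 := by
    rintro rfl
    apply hprime.ne_top
    rw [Ideal.eq_top_iff_one, Ideal.mem_colon_span_singleton]
    simp
  have key : ∀ z, (X z : MvPolynomial (Fin n) K) ∈ ((edgeIdeal K G) ^ k).colon (Ideal.span {f}) →
      2 * k - 1 ≤ d := by
    intro z hz
    rw [Ideal.mem_colon_span_singleton] at hz
    have hne : X z * f ≠ 0 := mul_ne_zero (X_ne_zero z) hf0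
    obtain ⟨m, hm⟩ := Finset.nonempty_of_ne_empty (mt support_eq_empty.1 hne)
    have h1 := pow_weight K _ _ 2 (edgeIdeal_degree K G) k _ hz m hm
    have h2 := ((isHomogeneous_X K z).mul hf).degree_eq_sum_deg_support hm
    have h3 : m.degree = ∑ i, m i := Finsupp.degree_eq_sum m
    simp only [Pi.one_apply, one_mul] at h1
    rw [← h3] at h1
    change 1 + d = m.degree at h2
    omega
  rcases hprime.mem_or_mem (hprime.mem_of_pow_mem k hle) with h | h
  · exact key x h
  · exact key y h

/-! ### A Dirac-type argument -/

lemma dirac {n : ℕ} (G : SimpleGraph (Fin n))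
    (key : ∀ (W : Finset (Fin n)) (s b : Fin n), s ∈ W → b ∉ W → ¬ G.Adj b s →
      (∀ w ∈ W, w ≠ s → G.Adj w s ∨ G.Adj w b) →
      ∃ c : Fin n → K, c s ≠ 0 ∧ (∀ v ∈ W, v ≠ s → ¬ G.Adj b v → c v = 0) ∧
        ∀ u ∈ W, ∀ v ∈ W, ¬ G.Adj u v → c u = c v) (U : Finset (Fin n)) :
    (∀ u ∈ U, ∀ v ∈ U, ¬ G.Adj u v) ∨
    ∃ x ∈ U, ∃ y ∈ U, G.Adj x y ∧
      (∀ u ∈ U, ∀ v ∈ U, G.Adj u v → G.Adj x u ∨ G.Adj x v) ∧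
      (∀ u ∈ U, ∀ v ∈ U, G.Adj u v → G.Adj y u ∨ G.Adj y v) := by
  classical
  induction U using Finset.strongInduction with
  | H U ih =>
  by_cases hcomp : ∀ u ∈ U, ∀ v ∈ U, ¬ G.Adj u v
  · exact Or.inl hcomp
  right
  push Not at hcomp
  obtain ⟨a₀, ha₀, b₀, hb₀, hab₀⟩ := hcomp
  let conn : Finset (Fin n) → Prop := fun A => ∀ c : Fin n → K,
    (∀ u ∈ A, ∀ v ∈ A, ¬ G.Adj u v → c u = c v) → ∀ u ∈ A, ∀ v ∈ A, c u = c v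
  let fam : Finset (Finset (Fin n)) := U.powerset.filter
    (fun A => A.Nonempty ∧ conn A ∧ ∃ b ∈ U, ∀ a ∈ A, G.Adj a b)
  have hne : fam.Nonempty := by
    refine ⟨{a₀}, ?_⟩
    simp only [fam, Finset.mem_filter, Finset.mem_powerset, Finset.singleton_subset_iff]
    refine ⟨ha₀, Finset.singleton_nonempty _, ?_, b₀, hb₀, by simpa using hab₀⟩
    intro c _ u hu v hv
    rw [Finset.mem_singleton.1 hu, Finset.mem_singleton.1 hv]
  obtain ⟨A, hA, hmax⟩ := Finset.exists_max_image fam Finset.card hne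
  simp only [fam, Finset.mem_filter, Finset.mem_powerset] at hA hmax
  obtain ⟨hAU, hAne, hconn, b, hbU, hb⟩ := hA
  have hins : ∀ s, (∃ a ∈ A, ¬ G.Adj a s) → conn (insert s A) := by
    rintro s ⟨a, ha, has⟩ c hc
    have hcA := hconn c (fun u hu v hv => hc u (Finset.mem_insert_of_mem hu) v
      (Finset.mem_insert_of_mem hv))
    have hsa : c a = c s := hc a (Finset.mem_insert_of_mem ha) s (Finset.mem_insert_self _ _) has
    have hall : ∀ u ∈ insert s A, c u = c a := by
      intro u hu
      rcases Finset.mem_insert.1 hu with rfl | hu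
      · exact hsa.symm
      · exact hcA u hu a ha
    intro u hu v hv
    rw [hall u hu, hall v hv]
  -- vertices outside `A` that miss some vertex of `A` miss all of `B`
  have hSB : ∀ s ∈ U, s ∉ A → (∃ a ∈ A, ¬ G.Adj a s) →
      ∀ b ∈ U, (∀ a ∈ A, G.Adj a b) → ¬ G.Adj b s := by
    intro s hs hsA hex b hb hbA hadj
    have := hmax (insert s A) ⟨Finset.insert_subset hs hAU, Finset.insert_nonempty _ _,
      hins s hex, b, hb, by
        intro a ha
        rcases Finset.mem_insert.1 ha with rfl | ha
        · exact hadj.symm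
        · exact hbA a ha⟩
    rw [Finset.card_insert_of_notMem hsA] at this
    omega
  have hS : ∀ s ∈ U, s ∉ A → (∃ a ∈ A, ¬ G.Adj a s) →
      ∀ t ∈ U, t ∉ A → (∃ a ∈ A, ¬ G.Adj a t) → ¬ G.Adj s t := by
    intro s hs hsA hsex t ht htA htex hst
    have hbs := hSB s hs hsA hsex b hbU hb
    have hbt := hSB t ht htA htex b hbU hb
    have hbA : b ∉ A := fun h => (hb b h).ne rfl
    have hbs' : b ≠ s := by rintro rfl; obtain ⟨a, ha, h⟩ := hsex; exact h (hb a ha)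
    have hbt' : b ≠ t := by rintro rfl; obtain ⟨a, ha, h⟩ := htex; exact h (hb a ha)
    obtain ⟨c, hc1, hc2, hc3⟩ := key (insert s (insert t A)) s b (by simp) (by simp [*]) hbs (by
      intro w hw hws
      simp only [Finset.mem_insert] at hw
      rcases hw with rfl | rfl | hw
      · exact absurd rfl hws
      · exact Or.inl hst.symm
      · exact Or.inr (hb w hw))
    apply hc1
    have hct : c t = 0 := hc2 t (by simp) hst.ne' hbt
    obtain ⟨a, ha, hat⟩ := htex
    have h1 : c a = c t := hc3 a (by simp [ha]) t (by simp) hat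
    have h2 : c s = c a := by
      apply hins s hsex c _ s (by simp) a (by simp [ha])
      intro u hu v hv
      apply hc3
      · simp only [Finset.mem_insert] at hu ⊢; tauto
      · simp only [Finset.mem_insert] at hv ⊢; tauto
    rw [h2, h1, hct]
  let B := U.filter (fun b => ∀ a ∈ A, G.Adj a b)
  have hBmem : ∀ b, b ∈ B ↔ b ∈ U ∧ ∀ a ∈ A, G.Adj a b := fun b => by simp [B]
  have hx : ∃ x ∈ A, ∀ u ∈ U \ B, ∀ v ∈ U \ B, G.Adj u v → G.Adj x u ∨ G.Adj x v := by
    have hAB : ∀ a ∈ A, a ∈ U \ B := by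
      intro a ha
      rw [Finset.mem_sdiff]
      exact ⟨hAU ha, fun h => (((hBmem a).1 h).2 a ha).ne rfl⟩
    rcases ih (U \ B) (by
      refine Finset.ssubset_iff_subset_ne.2 ⟨Finset.sdiff_subset, fun h => ?_⟩
      have : b ∈ U \ B := by rw [h]; exact hbU
      exact (Finset.mem_sdiff.1 this).2 ((hBmem b).2 ⟨hbU, hb⟩)) with h | ⟨x, hx, y, hy, hxy, h1, h2⟩
    · obtain ⟨a, ha⟩ := hAne
      exact ⟨a, ha, fun u hu v hv huv => absurd huv (h u hu v hv)⟩
    · by_cases hxA : x ∈ A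
      · exact ⟨x, hxA, h1⟩
      by_cases hyA : y ∈ A
      · exact ⟨y, hyA, h2⟩
      simp only [Finset.mem_sdiff, hBmem, not_and, not_forall] at hx hy
      obtain ⟨a, ha, hax⟩ := hx.2 hx.1
      obtain ⟨a', ha', hay⟩ := hy.2 hy.1
      exact absurd hxy (hS x hx.1 hxA ⟨a, ha, hax⟩ y hy.1 hyA ⟨a', ha', hay⟩)
  have hy : ∃ y ∈ B, ∀ u ∈ U \ A, ∀ v ∈ U \ A, G.Adj u v → G.Adj y u ∨ G.Adj y v := by
    rcases ih (U \ A) (by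
      refine Finset.ssubset_iff_subset_ne.2 ⟨Finset.sdiff_subset, fun h => ?_⟩
      obtain ⟨a, ha⟩ := hAne
      have : a ∈ U \ A := by rw [h]; exact hAU ha
      exact (Finset.mem_sdiff.1 this).2 ha) with h | ⟨x, hx, y, hy, hxy, h1, h2⟩
    · exact ⟨b, (hBmem b).2 ⟨hbU, hb⟩, fun u hu v hv huv => absurd huv (h u hu v hv)⟩
    · by_cases hxB : x ∈ B
      · exact ⟨x, hxB, h1⟩
      by_cases hyB : y ∈ B
      · exact ⟨y, hyB, h2⟩
      simp only [hBmem, not_and, not_forall] at hxB hyB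
      rw [Finset.mem_sdiff] at hx hy
      obtain ⟨a, ha, hax⟩ := hxB hx.1
      obtain ⟨a', ha', hay⟩ := hyB hy.1
      exact absurd hxy (hS x hx.1 hx.2 ⟨a, ha, hax⟩ y hy.1 hy.2 ⟨a', ha', hay⟩)
  obtain ⟨x, hxA, hx⟩ := hx
  obtain ⟨y, hyB, hy⟩ := hy
  have hyB' := (hBmem y).1 hyB
  refine ⟨x, hAU hxA, y, hyB'.1, hyB'.2 x hxA, ?_, ?_⟩
  · intro u hu v hv huv
    by_cases huB : u ∈ B
    · exact Or.inl (((hBmem u).1 huB).2 x hxA)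
    by_cases hvB : v ∈ B
    · exact Or.inr (((hBmem v).1 hvB).2 x hxA)
    exact hx u (Finset.mem_sdiff.2 ⟨hu, huB⟩) v (Finset.mem_sdiff.2 ⟨hv, hvB⟩) huv
  · intro u hu v hv huv
    by_cases huA : u ∈ A
    · exact Or.inl (hyB'.2 u huA).symm
    by_cases hvA : v ∈ A
    · exact Or.inr (hyB'.2 v hvA).symm
    exact hy u (Finset.mem_sdiff.2 ⟨hu, huA⟩) v (Finset.mem_sdiff.2 ⟨hv, hvA⟩) huv

/-! ### The Koszul complex -/

def sg {n : ℕ} (a : Fin n) (A : Finset (Fin n)) : K := (-1) ^ (A.filter (· < a)).card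

lemma sg_sq {n : ℕ} (a : Fin n) (A : Finset (Fin n)) : sg K a A * sg K a A = 1 := by
  unfold sg
  rw [← mul_pow]; simp

lemma sg_anti {n : ℕ} (i j : Fin n) (A : Finset (Fin n)) (hij : i ≠ j) (hi : i ∉ A) (hj : j ∉ A) :
    sg K j (insert i A) * sg K i A = - (sg K i (insert j A) * sg K j A) := by
  unfold sg
  rw [Finset.filter_insert, Finset.filter_insert]
  rcases lt_or_gt_of_ne hij with h | h
  · rw [if_pos h, if_neg (not_lt.2 h.le), Finset.card_insert_of_notMem (by simp [hi]), pow_succ]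
    ring
  · rw [if_pos h, if_neg (not_lt.2 h.le), Finset.card_insert_of_notMem (by simp [hj]), pow_succ]
    ring

def kd {n : ℕ} (y : Finset (Fin n) → MvPolynomial (Fin n) K) (A : Finset (Fin n)) :
    MvPolynomial (Fin n) K :=
  ∑ a, if a ∈ A then 0 else C (sg K a A) * (X a * y (insert a A))

lemma kd_sub {n : ℕ} (y z : Finset (Fin n) → MvPolynomial (Fin n) K) (A : Finset (Fin n)) :
    kd K (fun A => y A - z A) A = kd K y A - kd K z A := by
  unfold kd
  rw [← Finset.sum_sub_distrib]
  refine Finset.sum_congr rfl fun a _ => ?_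
  split_ifs
  · simp
  · ring

lemma kd_lin {n m : ℕ} (p : Fin m → MvPolynomial (Fin n) K)
    (y : Finset (Fin n) → Fin m → MvPolynomial (Fin n) K) (A : Finset (Fin n)) :
    kd K (fun A => ∑ j, p j * y A j) A = ∑ j, p j * kd K (fun A => y A j) A := by
  unfold kd
  simp_rw [Finset.mul_sum]
  rw [Finset.sum_comm]
  refine Finset.sum_congr rfl fun a _ => ?_
  split_ifs
  · simp
  · refine Finset.sum_congr rfl fun j _ => ?_
    ring

lemma kd_homog {n : ℕ} (y : Finset (Fin n) → MvPolynomial (Fin n) K) (d : ℕ)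
    (hy : ∀ A, (y A).IsHomogeneous d) (A : Finset (Fin n)) : (kd K y A).IsHomogeneous (d + 1) := by
  unfold kd
  apply IsHomogeneous.sum
  intro a _
  split_ifs
  · exact isHomogeneous_zero _ _ _
  · apply IsHomogeneous.C_mul
    rw [add_comm]
    exact (isHomogeneous_X K a).mul (hy _)

lemma kd_kd {n : ℕ} (y : Finset (Fin n) → MvPolynomial (Fin n) K) (A : Finset (Fin n)) :
    kd K (kd K y) A = 0 := by
  have h1 : kd K (kd K y) A = ∑ q ∈ (Finset.univ : Finset (Fin n × Fin n)).filter
      (fun q => q.1 ∉ A ∧ q.2 ∉ A ∧ q.1 ≠ q.2),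
      C (sg K q.2 (insert q.1 A) * sg K q.1 A) * (X q.1 * X q.2 * y (insert q.2 (insert q.1 A))) := by
    rw [Finset.sum_filter, ← Finset.univ_product_univ, Finset.sum_product]
    unfold kd
    refine Finset.sum_congr rfl fun a _ => ?_
    split_ifs with ha
    · simp [ha]
    · simp_rw [Finset.mul_sum]
      refine Finset.sum_congr rfl fun b _ => ?_
      by_cases hb : b ∈ insert a A
      · rw [if_pos hb, if_neg]
        · simp
        · rcases Finset.mem_insert.1 hb with rfl | hb
          · simp
          · simp [hb]
      · rw [if_neg hb, if_pos]
        · simp only [C_mul]; ring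
        · simp only [Finset.mem_insert, not_or] at hb
          exact ⟨ha, hb.2, fun h => hb.1 h.symm⟩
  rw [h1]
  refine Finset.sum_involution (fun q _ => (q.2, q.1)) ?_ ?_ ?_ ?_
  · rintro ⟨a, b⟩ hq
    simp only [Finset.mem_filter, Finset.mem_univ, true_and] at hq
    obtain ⟨ha, hb, hab⟩ := hq
    simp only
    rw [sg_anti K a b A hab ha hb, Finset.insert_comm b a, C_neg]
    ring
  · rintro ⟨a, b⟩ hq _ h
    simp only [Finset.mem_filter, Finset.mem_univ, true_and] at hq
    exact hq.2.2 (congrArg Prod.snd h)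
  · rintro ⟨a, b⟩ hq
    simp only [Finset.mem_filter, Finset.mem_univ, true_and] at hq ⊢
    exact ⟨hq.2.1, hq.1, hq.2.2.symm⟩
  · rintro ⟨a, b⟩ hq
    rfl

lemma single_sum_eq {n : ℕ} (p : MvPolynomial (Fin n) K) (hp : p.IsHomogeneous 1) :
    p = ∑ j, C (coeff (Finsupp.single j 1) p) * X j := by
  have h : p ∈ homogeneousSubmodule (Fin n) K 1 := hp
  rw [homogeneousSubmodule_one_eq_span_X] at h
  clear hp
  induction h using Submodule.span_induction with
  | mem x hx =>
    obtain ⟨i, rfl⟩ := hx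
    simp [coeff_X, Finsupp.single_left_inj]
  | zero => simp
  | add x y _ _ hx hy =>
    simp only [coeff_add, C_add, add_mul, Finset.sum_add_distrib]
    rw [← hx, ← hy]
  | smul a x _ hx =>
    simp only [coeff_smul, smul_eq_mul, C_mul, mul_assoc, ← Finset.mul_sum]
    rw [← hx, smul_eq_C_mul]

lemma coeff_kd {n : ℕ} (y : Finset (Fin n) → MvPolynomial (Fin n) K) (A : Finset (Fin n))
    (m : Fin n →₀ ℕ) :
    coeff m (kd K y A) = ∑ a, if a ∉ A ∧ m a ≠ 0 then
      sg K a A * coeff (m - Finsupp.single a 1) (y (insert a A)) else 0 := by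
  unfold kd
  rw [coeff_sum]
  refine Finset.sum_congr rfl fun a _ => ?_
  by_cases ha : a ∈ A
  · simp [ha]
  · simp [ha, coeff_C_mul, coeff_X_mul', Finsupp.mem_support_iff]

lemma exact_lin {n : ℕ} (y : Finset (Fin n) → MvPolynomial (Fin n) K)
    (hy : ∀ A, (y A).IsHomogeneous 1) (hc : ∀ A, kd K y A = 0) :
    ∃ c : Finset (Fin n) → K, ∀ A, y A = kd K (fun B => C (c B)) A := by
  classical
  -- diagonal terms vanish
  have hdiag : ∀ A j, j ∈ A → coeff (Finsupp.single j 1) (y A) = 0 := by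
    intro A j hj
    have h := congrArg (coeff (Finsupp.single j 2)) (hc (A.erase j))
    rw [coeff_kd, Finset.sum_eq_single j] at h
    · rw [if_pos (by simp), Finset.insert_erase hj, ← Finsupp.single_tsub, coeff_zero] at h
      rcases mul_eq_zero.1 h with h | h
      · have := sg_sq K j (A.erase j)
        rw [h] at this; simp at this
      · exact h
    · intro b _ hb
      rw [if_neg]
      simp [hb.symm]
    · simp
  have hoff : ∀ A i j, i ∉ A → j ∉ A → i ≠ j →
      sg K i A * coeff (Finsupp.single j 1) (y (insert i A))
        + sg K j A * coeff (Finsupp.single i 1) (y (insert j A)) = 0 := by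
    intro A i j hi hj hij
    have h := congrArg (coeff (Finsupp.single i 1 + Finsupp.single j 1)) (hc A)
    rw [coeff_kd, ← Finset.sum_subset (Finset.subset_univ {i, j}), Finset.sum_pair hij,
      if_pos (by simp [hi]), if_pos (by simp [hj]), add_tsub_cancel_left, add_tsub_cancel_right,
      coeff_zero] at h
    · exact h
    · intro a _ ha
      simp only [Finset.mem_insert, Finset.mem_singleton, not_or] at ha
      rw [if_neg]
      simp [Ne.symm ha.1, Ne.symm ha.2]
  let τ : Finset (Fin n) → Fin n → K := fun B j =>
    sg K j (B.erase j) * coeff (Finsupp.single j 1) (y (B.erase j))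
  have hτ : ∀ B, ∀ i ∈ B, ∀ j ∈ B, τ B i = τ B j := by
    intro B i hi j hj
    by_cases hij : i = j
    · rw [hij]
    have e1 : insert i ((B.erase i).erase j) = B.erase j := by
      rw [Finset.erase_right_comm, Finset.insert_erase]; simp [hij, hi]
    have e2 : insert j ((B.erase i).erase j) = B.erase i := by
      rw [Finset.insert_erase]; simp [Ne.symm hij, hj]
    have h := hoff ((B.erase i).erase j) i j (by simp) (by simp) hij
    have ha := sg_anti K i j ((B.erase i).erase j) hij (by simp) (by simp)
    have s1 := sg_sq K i ((B.erase i).erase j)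
    have s2 := sg_sq K j ((B.erase i).erase j)
    rw [e1, e2] at h ha
    simp only [τ]
    generalize sg K i ((B.erase i).erase j) = p at *
    generalize sg K j ((B.erase i).erase j) = q at *
    generalize sg K j (B.erase j) = r at *
    generalize sg K i (B.erase i) = s at *
    generalize coeff (Finsupp.single j 1) (y (B.erase j)) = t at *
    generalize coeff (Finsupp.single i 1) (y (B.erase i)) = u at *
    -- p t + q u = 0, r p = - s q
    linear_combination (-r * p) * h + r * t * s1 + (q * u) * ha - s * u * s2
  refine ⟨fun B => if h : B.Nonempty then τ B h.choose else 0, ?_⟩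
  intro A
  rw [single_sum_eq K (y A) (hy A)]
  unfold kd
  refine Finset.sum_congr rfl fun j _ => ?_
  split_ifs with hj
  · rw [hdiag A j hj]; simp
  · have hne : (insert j A).Nonempty := Finset.insert_nonempty _ _
    simp only [hne, dif_pos]
    rw [hτ (insert j A) _ hne.choose_spec j (Finset.mem_insert_self _ _)]
    simp only [τ, Finset.erase_insert hj]
    rw [mul_comm (X j), ← mul_assoc, ← C_mul, ← mul_assoc, sg_sq, one_mul]

lemma hc_mul {n : ℕ} (d e : ℕ) (a w : MvPolynomial (Fin n) K) (ha : a.IsHomogeneous d) :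
    homogeneousComponent (d + e) (a * w) = a * homogeneousComponent e w := by
  let _ := gradedAlgebra (σ := Fin n) (R := K)
  have := DirectSum.coe_decompose_mul_add_of_left_mem (homogeneousSubmodule (Fin n) K)
    (i := d) (j := e) (b := w) ha
  rw [← decomposition.decompose'_apply, ← decomposition.decompose'_apply]
  exact this

lemma lift_homog {n m : ℕ} (d : ℕ) (p : Fin m → MvPolynomial (Fin n) K)
    (hp : ∀ j, (p j).IsHomogeneous d) (w : Fin m → MvPolynomial (Fin n) K)
    (h : (∑ j, p j * w j).IsHomogeneous (d + 1)) :
    ∑ j, p j * homogeneousComponent 1 (w j) = ∑ j, p j * w j := by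
  conv_rhs => rw [← homogeneousComponent_eq_self h, map_sum]
  refine Finset.sum_congr rfl fun j _ => ?_
  rw [hc_mul K d 1 _ _ (hp j)]

lemma chase {n : ℕ} (b : ℕ → ℕ)
    (M : ∀ i : ℕ, Matrix (Fin (b i)) (Fin (b (i + 1))) (MvPolynomial (Fin n) K))
    (hM : ∀ i j l, ((M i) j l).IsHomogeneous 1)
    (hex : ∀ (i : ℕ) (v : Fin (b (i + 1)) → MvPolynomial (Fin n) K),
      (M i).mulVec v = 0 ↔ ∃ w, (M (i + 1)).mulVec w = v) (q : ℕ) :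
    ∀ (i : ℕ) (y : Finset (Fin n) → Fin (b i) → MvPolynomial (Fin n) K),
      (∀ A j, (y A j).IsHomogeneous 1) → (∀ A, q ≤ A.card → y A = 0) →
      (∀ A, ∃ w, (M i).mulVec w = fun j => kd K (fun A => y A j) A) →
      ∃ c : Finset (Fin n) → Fin (b i) → K, ∀ A, ∃ w,
        (M i).mulVec w = fun j => y A j - kd K (fun B => C (c B j)) A := by
  classical
  induction q with
  | zero =>
    intro i y _ h0 _
    refine ⟨0, fun A => ⟨0, ?_⟩⟩
    ext1 j
    simp [h0 A (Nat.zero_le _), kd]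
  | succ q ih =>
    intro i y hy h0 hlift
    choose w hw using hlift
    have hmul : ∀ (v : Fin (b (i+1)) → MvPolynomial (Fin n) K) (r : Fin (b i)),
        (M i).mulVec v r = ∑ j, M i r j * v j := fun v r => rfl
    let y1 : Finset (Fin n) → Fin (b (i+1)) → MvPolynomial (Fin n) K := fun A j =>
      if q ≤ A.card then 0 else homogeneousComponent 1 (w A j)
    have hy1 : ∀ A r, ∑ j, M i r j * y1 A j = kd K (fun A => y A r) A := by
      intro A r
      by_cases hA : q ≤ A.card
      · have e : kd K (fun A => y A r) A = 0 := by
          unfold kd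
          refine Finset.sum_eq_zero fun a _ => ?_
          split_ifs with ha
          · rfl
          · simp only
            rw [h0 (insert a A) (by rw [Finset.card_insert_of_notMem ha]; omega)]
            simp
        rw [e]
        simp [y1, hA]
      · simp only [y1, if_neg hA]
        have e := congrFun (hw A) r
        rw [hmul] at e
        rw [lift_homog K 1 _ (hM i r), e]
        rw [e]
        exact kd_homog K _ 1 (fun A => hy A r) A
    have hcomm : ∀ (v : Finset (Fin n) → Fin (b (i+1)) → MvPolynomial (Fin n) K) A r,
        (M i).mulVec (fun j => kd K (fun A => v A j) A) r =
          kd K (fun A => ∑ j, M i r j * v A j) A := by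
      intro v A r
      rw [hmul, kd_lin]
    obtain ⟨c1, hc1⟩ := ih (i + 1) y1
      (by
        intro A j
        simp only [y1]
        split_ifs
        · exact isHomogeneous_zero _ _ _
        · exact homogeneousComponent_isHomogeneous _ _)
      (by
        intro A hA
        ext1 j
        simp [y1, hA])
      (by
        intro A
        rw [← hex]
        ext1 r
        rw [hcomm]
        simp_rw [hy1]
        exact kd_kd K _ A)
    have hk : ∀ A r, kd K (fun A => y A r) A =
        kd K (fun A => ∑ j, M i r j * C (c1 A j)) A := by
      intro A r
      have h := congrFun ((hex i _).2 (hc1 A)) r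
      rw [hmul] at h
      simp only [mul_sub, Finset.sum_sub_distrib, hy1] at h
      rw [← kd_lin K (M i r) (fun B j => C (c1 B j))] at h
      exact sub_eq_zero.1 h
    have hfin : ∀ r, ∃ c : Finset (Fin n) → K, ∀ A,
        y A r - ∑ j, M i r j * C (c1 A j) = kd K (fun B => C (c B)) A := by
      intro r
      apply exact_lin K (fun A => y A r - ∑ j, M i r j * C (c1 A j))
      · intro A
        apply (hy A r).sub
        apply IsHomogeneous.sum
        intro j _
        exact (hM i r j).mul (isHomogeneous_C _ _)
      · intro A
        rw [kd_sub, hk, sub_self]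
    choose c hc using hfin
    refine ⟨fun A r => c r A, fun A => ⟨fun j => C (c1 A j), ?_⟩⟩
    ext1 r
    rw [hmul, ← hc r A]
    ring

lemma key_lemma {n : ℕ} (G : SimpleGraph (Fin n))
    (hlin : HasLinearResolution K (edgeIdeal K G) 2)
    (W : Finset (Fin n)) (s b : Fin n) (hs : s ∈ W) (hb : b ∉ W) (hbs : ¬ G.Adj b s)
    (hW : ∀ w ∈ W, w ≠ s → G.Adj w s ∨ G.Adj w b) :
    ∃ c : Fin n → K, c s ≠ 0 ∧ (∀ v ∈ W, v ≠ s → ¬ G.Adj b v → c v = 0) ∧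
      ∀ u ∈ W, ∀ v ∈ W, ¬ G.Adj u v → c u = c v := by
  classical
  obtain ⟨β, g, M, hg, hspan, hM, h0, hex⟩ := hlin
  let z : Finset (Fin n) → MvPolynomial (Fin n) K := fun A =>
    if A = W.erase s then X b * X s else 0
  have hzh : ∀ A, (z A).IsHomogeneous 2 := by
    intro A
    simp only [z]
    split_ifs
    · exact (isHomogeneous_X K b).mul (isHomogeneous_X K s)
    · exact isHomogeneous_zero _ _ _
  have hzI : ∀ A, kd K z A ∈ edgeIdeal K G := by
    intro A
    unfold kd
    refine Ideal.sum_mem _ fun a _ => ?_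
    split_ifs with ha
    · exact Ideal.zero_mem _
    · refine Ideal.mul_mem_left _ _ ?_
      simp only [z]
      split_ifs with hA
      · have haW : a ∈ W.erase s := hA ▸ Finset.mem_insert_self a A
        rw [Finset.mem_erase] at haW
        rcases hW a haW.2 haW.1 with h | h
        · rw [mul_left_comm]
          exact Ideal.mul_mem_left _ _ (edge_mem K G h)
        · rw [← mul_assoc]
          exact Ideal.mul_mem_right _ _ (edge_mem K G h)
      · simp
  have hlift : ∀ A, ∃ w : Fin (β 0) → MvPolynomial (Fin n) K, (∀ j, (w j).IsHomogeneous 1) ∧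
      ∑ j, g j * w j = kd K z A := by
    intro A
    have h := hzI A
    rw [← hspan, Ideal.mem_span_range_iff_exists_fun] at h
    obtain ⟨w, hw⟩ := h
    simp_rw [mul_comm (w _)] at hw
    refine ⟨fun j => homogeneousComponent 1 (w j),
      fun j => homogeneousComponent_isHomogeneous _ _, ?_⟩
    rw [lift_homog K 2 g hg w, hw]
    rw [hw]
    exact kd_homog K z 2 hzh A
  choose y hy1 hy2 using hlift
  obtain ⟨c, hc⟩ := chase K β M hM hex (n + 1) 0 y hy1
    (by
      intro A hA
      have := Finset.card_le_univ A
      simp at this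
      omega)
    (by
      intro A
      rw [← h0]
      simp_rw [mul_comm _ (g _)]
      rw [← kd_lin]
      simp_rw [hy2]
      exact kd_kd K _ A)
  let z' : Finset (Fin n) → MvPolynomial (Fin n) K := fun A => z A - ∑ j, g j * C (c A j)
  have hz' : ∀ A, kd K z' A = 0 := by
    intro A
    have h := (h0 _).2 (hc A)
    simp_rw [mul_comm _ (g _), mul_sub, Finset.sum_sub_distrib, hy2] at h
    rw [← kd_lin K g (fun B j => C (c B j))] at h
    rw [kd_sub]
    exact h
  have hcoeff : ∀ A u v, ¬ G.Adj u v →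
      coeff (Finsupp.single u 1 + Finsupp.single v 1) (z' A) =
      coeff (Finsupp.single u 1 + Finsupp.single v 1) (z A) := by
    intro A u v huv
    simp only [z', coeff_sub]
    rw [edgeIdeal_coeff K G (p := ∑ j, g j * C (c A j)) _ huv, sub_zero]
    refine Ideal.sum_mem _ fun j _ => Ideal.mul_mem_right _ _ ?_
    rw [← hspan]
    exact Ideal.subset_span ⟨j, rfl⟩
  have hbne : ∀ v ∈ W, b ≠ v := fun v hv h => hb (h ▸ hv)
  let ζ : Fin n → K := fun v =>
    coeff (Finsupp.single b 1 + Finsupp.single v 1) (z' (W.erase v))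
  refine ⟨fun v => sg K v (W.erase v) * ζ v, ?_, ?_, ?_⟩
  · have h1 : ζ s = 1 := by
      simp only [ζ]
      rw [hcoeff _ _ _ hbs]
      simp only [z, if_true]
      rw [coeff_X_mul, coeff_X, if_pos rfl]
    simp only [h1, mul_one]
    intro h
    have := sg_sq K s (W.erase s)
    rw [h] at this; simp at this
  · intro v hv hvs hbv
    have : ζ v = 0 := by
      simp only [ζ]
      rw [hcoeff _ _ _ hbv]
      have hne : W.erase v ≠ W.erase s := by
        intro h
        have : v ∈ W.erase s := Finset.mem_erase.2 ⟨hvs, hv⟩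
        rw [← h] at this
        simp at this
      simp [z, hne]
    simp [this]
  · intro u hu v hv huv
    by_cases huv' : u = v
    · rw [huv']
    simp only
    set A := (W.erase u).erase v with hA
    have e1 : insert u A = W.erase v := by
      rw [hA, Finset.erase_right_comm, Finset.insert_erase]; simp [huv', hu]
    have e2 : insert v A = W.erase u := by
      rw [hA, Finset.insert_erase]; simp [Ne.symm huv', hv]
    have hbA : b ∉ A := by simp [hA, hb]
    have huA : u ∉ A := by simp [hA]
    have hvA : v ∉ A := by simp [hA]
    have hbu := hbne u hu
    have hbv := hbne v hv
    have ha := sg_anti K u v A huv' huA hvA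
    have s1 := sg_sq K u A
    have s2 := sg_sq K v A
    have h := congrArg (coeff (Finsupp.single b 1 + Finsupp.single u 1 + Finsupp.single v 1)) (hz' A)
    rw [coeff_kd, ← Finset.sum_subset (Finset.subset_univ {b, u, v}),
      Finset.sum_insert (by simp [hbu, hbv]), Finset.sum_pair huv',
      if_pos (by simp [hbA]), if_pos (by simp [huA]), if_pos (by simp [hvA]), coeff_zero] at h
    · have m1 : (Finsupp.single b 1 + Finsupp.single u 1 + Finsupp.single v 1 : Fin n →₀ ℕ)
          - Finsupp.single b 1 = Finsupp.single u 1 + Finsupp.single v 1 := by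
        rw [add_assoc, add_tsub_cancel_left]
      have m2 : (Finsupp.single b 1 + Finsupp.single u 1 + Finsupp.single v 1 : Fin n →₀ ℕ)
          - Finsupp.single u 1 = Finsupp.single b 1 + Finsupp.single v 1 := by
        rw [add_right_comm, add_tsub_cancel_right]
      have m3 : (Finsupp.single b 1 + Finsupp.single u 1 + Finsupp.single v 1 : Fin n →₀ ℕ)
          - Finsupp.single v 1 = Finsupp.single b 1 + Finsupp.single u 1 := by
        rw [add_tsub_cancel_right]
      have hzb : z (insert b A) = 0 := by
        simp only [z]
        rw [if_neg]
        intro h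
        have : b ∈ W.erase s := h ▸ Finset.mem_insert_self b A
        exact hb (Finset.mem_of_mem_erase this)
      rw [m1, m2, m3, hcoeff _ _ _ huv, hzb, coeff_zero, mul_zero, zero_add, e1, e2] at h
      change sg K u A * ζ v + sg K v A * ζ u = 0 at h
      rw [e1, e2] at ha
      generalize sg K u A = p at *
      generalize sg K v A = q at *
      generalize sg K v (W.erase v) = r at *
      generalize sg K u (W.erase u) = t at *
      linear_combination (-r * p) * h + r * ζ v * s1 + (q * ζ u) * ha - t * ζ u * s2
    · intro a _ ha
      simp only [Finset.mem_insert, Finset.mem_singleton, not_or] at ha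
      rw [if_neg]
      simp [Ne.symm ha.1, Ne.symm ha.2.1, Ne.symm ha.2.2]

/-- If the edge ideal `I(G)` has a linear resolution, then `v(I(G)^k) = 2k - 1`
for all `k ≥ 1`. -/
theorem stmt14 {n : ℕ} (G : SimpleGraph (Fin n)) (he : G.edgeSet.Nonempty)
    (hlin : HasLinearResolution K (edgeIdeal K G) 2) :
    ∀ k : ℕ, 1 ≤ k → vNumber K ((edgeIdeal K G) ^ k) = 2 * k - 1 := by
  intro k hk
  rcases dirac K G (fun W s b h1 h2 h3 h4 => key_lemma K G hlin W s b h1 h2 h3 h4)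
    Finset.univ with h | ⟨x, _, y, _, hxy, hx, _⟩
  · obtain ⟨e, he⟩ := he
    induction e with
    | _ u v => exact absurd he (h u (Finset.mem_univ _) v (Finset.mem_univ _))
  · exact vNumber_of_simplicial K G x y hxy
      (fun u v => hx u (Finset.mem_univ _) v (Finset.mem_univ _)) k hk

end
end

section
/- Let (P, ⪰) be a finite poset with P = {p_1,...,p_n} and Hibi ideal H_P ⊂ S = K[x_1,...,x_n,y_1,...,y_n]. For every k ≥ 1 and all indices i ≠ j with p_i ≺ p_j, the local v-number at the associated prime (x_i, y_j) of H_P^k is v_{(x_i,y_j)}(H_P^k) = |P|·k + |{ p_ℓ ∈ P : p_i ≺ p_ℓ ≺ p_j }|; moreover v_{(x_i,y_i)}(H_P^k) = |P|·k − 1 for all p_i ∈ P. -/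
open MvPolynomial

noncomputable section

variable (K : Type*) [Field K]

/-- The generator `u_𝓘 = (∏_{i ∈ 𝓘} x_i) (∏_{i ∉ 𝓘} y_i)` of the Hibi ideal attached to a
poset ideal `𝓘`; the variables are indexed by `P ⊕ P`, `x_i = X (inl i)`, `y_i = X (inr i)`. -/
def posetGen {P : Type*} [Fintype P] [DecidableEq P] (𝓘 : Finset P) :
    MvPolynomial (P ⊕ P) K :=
  (∏ i ∈ 𝓘, X (Sum.inl i)) * ∏ i ∈ 𝓘ᶜ, X (Sum.inr i)

/-- The Hibi ideal of a finite poset `P`, generated by the monomials `u_𝓘` for all poset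
ideals (lower sets) `𝓘` of `P`. -/
def HibiIdeal (P : Type*) [Fintype P] [DecidableEq P] [PartialOrder P] :
    Ideal (MvPolynomial (P ⊕ P) K) :=
  Ideal.span {f | ∃ 𝓘 : Finset P, (∀ a b : P, a ≤ b → b ∈ 𝓘 → a ∈ 𝓘) ∧ f = posetGen K 𝓘}

/-- The exponent vectors `(a,b)` with `a_i + b_j ≥ k` for all `i ≤ j`. -/
def expSet (P : Type*) [PartialOrder P] (k : ℕ) : Set (P ⊕ P →₀ ℕ) :=
  {m | ∀ i j : P, i ≤ j → k ≤ m (Sum.inl i) + m (Sum.inr j)}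

/-- The exponent vector of `u_𝓘`. -/
def uExp {P : Type*} [Fintype P] [DecidableEq P] (I : Finset P) : P ⊕ P →₀ ℕ :=
  Finsupp.equivFunOnFinite.symm
    (Sum.elim (fun p => if p ∈ I then 1 else 0) (fun p => if p ∈ I then 0 else 1))

theorem posetGen_eq {P : Type*} [Fintype P] [DecidableEq P] (I : Finset P) :
    posetGen K I = monomial (uExp I) 1 := by
  rw [monomial_eq, Finsupp.prod_fintype _ _ (by simp), Fintype.prod_sum_type]
  simp only [uExp, posetGen, Finsupp.coe_equivFunOnFinite_symm, Sum.elim_inl, Sum.elim_inr,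
    map_one, one_mul]
  congr 1
  · rw [← Finset.prod_subset (Finset.subset_univ I)]
    · exact Finset.prod_congr rfl fun x hx => by simp [hx]
    · intro x _ hx; simp [hx]
  · rw [← Finset.prod_subset (Finset.subset_univ Iᶜ)]
    · exact Finset.prod_congr rfl fun x hx => by simp [Finset.mem_compl.1 hx]
    · intro x _ hx
      have : x ∈ I := by simpa using hx
      simp [this]

theorem mono_mem {P : Type*} [Fintype P] [DecidableEq P] [PartialOrder P] (k : ℕ) :
    ∀ m ∈ expSet P k, monomial m (1 : K) ∈ HibiIdeal K P ^ k := by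
  classical
  induction k with
  | zero => intro m _; simp
  | succ k ih =>
    intro m hm
    let I : Finset P := Finset.univ.filter fun p => ∃ q, p ≤ q ∧ m (Sum.inr q) ≤ k
    have hI : ∀ p, p ∈ I ↔ ∃ q, p ≤ q ∧ m (Sum.inr q) ≤ k := by simp [I]
    have hlow : ∀ a b : P, a ≤ b → b ∈ I → a ∈ I := by
      intro a b hab hb
      obtain ⟨q, h1, h2⟩ := (hI b).1 hb
      exact (hI a).2 ⟨q, hab.trans h1, h2⟩
    have hin : ∀ p ∈ I, 1 ≤ m (Sum.inl p) := by
      intro p hp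
      obtain ⟨q, h1, h2⟩ := (hI p).1 hp
      have := hm p q h1
      omega
    have hout : ∀ p, p ∉ I → k + 1 ≤ m (Sum.inr p) := by
      intro p hp
      by_contra h
      exact hp ((hI p).2 ⟨p, le_rfl, by omega⟩)
    have hle : uExp I ≤ m := by
      rintro (p | p)
      · by_cases hp : p ∈ I
        · simpa [uExp, hp] using hin p hp
        · simp [uExp, hp]
      · by_cases hp : p ∈ I
        · simp [uExp, hp]
        · have := hout p hp
          simp [uExp, hp]; omega
    have hsub : m - uExp I ∈ expSet P k := by
      intro r s hrs
      have h := hm r s hrs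
      by_cases hr : r ∈ I <;> by_cases hs : s ∈ I
      · have := hin r hr
        simp [uExp, hr, hs]; omega
      · have := hin r hr
        have := hout s hs
        simp [uExp, hr, hs]; omega
      · exact absurd (hlow r s hrs hs) hr
      · have := hout s hs
        simp [uExp, hr, hs]; omega
    have : monomial m (1 : K) = monomial (m - uExp I) 1 * posetGen K I := by
      rw [posetGen_eq, monomial_mul, mul_one, tsub_add_cancel_of_le hle]
    rw [this, pow_succ]
    exact Ideal.mul_mem_mul (ih _ hsub) (Ideal.subset_span ⟨I, hlow, rfl⟩)

theorem hibi_pow_eq (P : Type*) [Fintype P] [DecidableEq P] [PartialOrder P] (k : ℕ) :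
    HibiIdeal K P ^ k = Ideal.span ((fun m => monomial m (1 : K)) '' expSet P k) := by
  apply le_antisymm
  · induction k with
    | zero =>
      have : (Ideal.span ((fun m => monomial m (1 : K)) '' expSet P 0)) = ⊤ := by
        rw [Ideal.eq_top_iff_one]
        exact Ideal.subset_span ⟨0, by intro i j _; simp, rfl⟩
      rw [this]; exact le_top
    | succ k ih =>
      rw [pow_succ]
      refine (Ideal.mul_mono_left ih).trans ?_
      rw [HibiIdeal, Ideal.span_mul_span', Ideal.span_le]
      rintro _ ⟨_, ⟨m, hm, rfl⟩, _, ⟨I, hI, rfl⟩, rfl⟩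
      apply Ideal.subset_span
      refine ⟨m + uExp I, ?_, ?_⟩
      · intro r s hrs
        have h := hm r s hrs
        by_cases hr : r ∈ I <;> by_cases hs : s ∈ I
        · simp [uExp, hr, hs]; omega
        · simp [uExp, hr, hs]; omega
        · exact absurd (hI r s hrs hs) hr
        · simp [uExp, hr, hs]; omega
      · simp [posetGen_eq, monomial_mul]
  · rw [Ideal.span_le]
    rintro _ ⟨m, hm, rfl⟩
    exact mono_mem K k m hm

theorem mem_hibi_pow {P : Type*} [Fintype P] [DecidableEq P] [PartialOrder P] (k : ℕ)
    (f : MvPolynomial (P ⊕ P) K) :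
    f ∈ HibiIdeal K P ^ k ↔ ∀ m ∈ f.support, m ∈ expSet P k := by
  rw [hibi_pow_eq, mem_ideal_span_monomial_image]
  refine forall₂_congr fun m _ => ⟨?_, fun h => ⟨m, h, le_rfl⟩⟩
  rintro ⟨s, hs, hle⟩ i j hij
  exact (hs i j hij).trans (add_le_add (hle _) (hle _))

theorem mem_colon_span {P : Type*} (I : Ideal (MvPolynomial (P ⊕ P) K))
    (f g : MvPolynomial (P ⊕ P) K) :
    g ∈ I.colon (Ideal.span {f}) ↔ g * f ∈ I := by
  rw [Submodule.mem_colon]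
  constructor
  · intro h; exact h f (Ideal.mem_span_singleton_self f)
  · intro h p hp
    obtain ⟨c, rfl⟩ := Ideal.mem_span_singleton.1 hp
    rw [smul_eq_mul, ← mul_assoc]
    exact I.mul_mem_right _ h

/-- Structure of a monomial outside `H^k` in a polynomial with colon ideal `(x_i,y_j)`. -/
theorem exists_mono {P : Type*} [Fintype P] [DecidableEq P] [PartialOrder P] (k d : ℕ)
    (i j : P) (f : MvPolynomial (P ⊕ P) K) (hf : f.IsHomogeneous d)
    (h : (HibiIdeal K P ^ k).colon (Ideal.span {f}) =
      Ideal.span {(X (Sum.inl i) : MvPolynomial (P ⊕ P) K), X (Sum.inr j)}) :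
    ∃ a b : P → ℕ, ∑ p, (a p + b p) = d ∧ a i + b j + 1 = k ∧
      ∀ r s, r ≤ s → ¬ (r = i ∧ s = j) → k ≤ a r + b s := by
  have hx : X (Sum.inl i) * f ∈ HibiIdeal K P ^ k := by
    rw [← mem_colon_span, h]; exact Ideal.subset_span (by simp)
  have hy : X (Sum.inr j) * f ∈ HibiIdeal K P ^ k := by
    rw [← mem_colon_span, h]; exact Ideal.subset_span (by simp)
  have hn : f ∉ HibiIdeal K P ^ k := by
    intro hf'
    have h1 : (1 : MvPolynomial (P ⊕ P) K) ∈
        Ideal.span {(X (Sum.inl i) : MvPolynomial (P ⊕ P) K), X (Sum.inr j)} := by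
      rw [← h, mem_colon_span, one_mul]; exact hf'
    obtain ⟨u, v, huv⟩ := Ideal.mem_span_pair.1 h1
    have := congrArg (constantCoeff (R := K)) huv
    simp at this
  rw [mem_hibi_pow] at hx hy hn
  push Not at hn
  obtain ⟨m, hm, hmn⟩ := hn
  have hmx := hx (Finsupp.single (Sum.inl i) 1 + m) (by
    rw [mem_support_iff, coeff_X_mul]; exact mem_support_iff.1 hm)
  have hmy := hy (Finsupp.single (Sum.inr j) 1 + m) (by
    rw [mem_support_iff, coeff_X_mul]; exact mem_support_iff.1 hm)
  have key : ∀ r s, r ≤ s → ¬ (r = i ∧ s = j) → k ≤ m (Sum.inl r) + m (Sum.inr s) := by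
    intro r s hrs hne
    have h1 := hmx r s hrs
    have h2 := hmy r s hrs
    by_cases hr : i = r
    · have hs : ¬ j = s := fun hs => hne ⟨hr.symm, hs.symm⟩
      simpa [Finsupp.single_apply, hs] using h2
    · simpa [Finsupp.single_apply, hr] using h1
  refine ⟨fun p => m (Sum.inl p), fun p => m (Sum.inr p), ?_, ?_, key⟩
  · have := hf (mem_support_iff.1 hm)
    rw [Finsupp.weight_apply, Finsupp.sum_fintype _ _ (by simp), Fintype.sum_sum_type] at this
    simpa [Finset.sum_add_distrib] using this
  · simp only [expSet, Set.mem_ofPred_eq, not_forall] at hmn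
    obtain ⟨r, s, hrs, hlt⟩ := hmn
    have : r = i ∧ s = j := by
      by_contra hc; exact hlt (key r s hrs hc)
    obtain ⟨rfl, rfl⟩ := this
    have := hmx r s hrs
    simp [Finsupp.single_apply] at this
    dsimp only
    omega

theorem colon_mono {P : Type*} [Fintype P] [DecidableEq P] [PartialOrder P] (k : ℕ)
    (i j : P) (hij : i ≤ j) (a b : P → ℕ) (h1 : a i + b j + 1 = k)
    (h2 : ∀ r s, r ≤ s → ¬ (r = i ∧ s = j) → k ≤ a r + b s) :
    ∃ f : MvPolynomial (P ⊕ P) K, f.IsHomogeneous (∑ p, (a p + b p)) ∧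
      (HibiIdeal K P ^ k).colon (Ideal.span {f}) =
      Ideal.span {(X (Sum.inl i) : MvPolynomial (P ⊕ P) K), X (Sum.inr j)} := by
  classical
  let m : P ⊕ P →₀ ℕ := Finsupp.equivFunOnFinite.symm (Sum.elim a b)
  have hma : ∀ p, m (Sum.inl p) = a p := fun p => rfl
  have hmb : ∀ p, m (Sum.inr p) = b p := fun p => rfl
  refine ⟨monomial m 1, ?_, ?_⟩
  · apply isHomogeneous_monomial
    rw [Finsupp.degree_eq_sum, Fintype.sum_sum_type, Finset.sum_add_distrib]
    rfl
  · ext g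
    have hset : ({X (Sum.inl i), X (Sum.inr j)} : Set (MvPolynomial (P ⊕ P) K)) =
        X '' {Sum.inl i, Sum.inr j} := by simp [Set.image_pair]
    rw [mem_colon_span, mem_hibi_pow, hset, mem_ideal_span_X_image]
    constructor
    · intro h n hn
      have := h (n + m) (by
        rw [mem_support_iff, coeff_mul_monomial, mul_one]; exact mem_support_iff.1 hn) i j hij
      simp only [Finsupp.add_apply, hma, hmb] at this
      by_cases h0 : n (Sum.inl i) = 0
      · exact ⟨Sum.inr j, by simp, by omega⟩
      · exact ⟨Sum.inl i, by simp, h0⟩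
    · intro h n hn r s hrs
      rw [mem_support_iff, coeff_mul_monomial'] at hn
      split_ifs at hn with hle
      swap
      · exact absurd rfl hn
      have hr := hle (Sum.inl r)
      have hs := hle (Sum.inr s)
      rw [hma] at hr
      rw [hmb] at hs
      by_cases hc : r = i ∧ s = j
      · obtain ⟨rfl, rfl⟩ := hc
        obtain ⟨v, hv, hv0⟩ := h (n - m) (by rw [mem_support_iff]; simpa using hn)
        rcases hv with rfl | rfl
        · rw [Finsupp.tsub_apply, hma] at hv0; omega
        · rw [Finsupp.tsub_apply, hmb] at hv0; omega
      · have := h2 r s hrs hc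
        omega

open Classical in
theorem good_exp {P : Type*} [Fintype P] [DecidableEq P] [PartialOrder P] (k : ℕ) (hk : 1 ≤ k)
    (i j : P) (hij : i ≤ j) : ∃ a b : P → ℕ, a i + b j + 1 = k ∧
    (∀ r s, r ≤ s → ¬ (r = i ∧ s = j) → k ≤ a r + b s) ∧
    ∀ r, (a r + b r) + (if r = i then 1 else 0) = k + (if i ≤ r ∧ r < j then 1 else 0) := by
  classical
  refine ⟨fun r => if r ≤ j then (if r = i then k - 1 else k) else 0,
    fun r => if r ≤ j then (if i ≤ r ∧ r ≠ j then 1 else 0) else k, ?_, ?_, ?_⟩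
  · simp [hij]; omega
  · intro r s hrs hne
    by_cases hs : s ≤ j
    · have hr := hrs.trans hs
      by_cases hri : r = i
      · have hsj : s ≠ j := fun h => hne ⟨hri, h⟩
        subst hri
        simp [hs, hr, hsj, hrs]; omega
      · simp [hs, hr, hri]
    · simp [hs]
  · intro r
    by_cases hr : r ≤ j
    · have e : (r < j) ↔ r ≠ j := ⟨fun h => h.ne, fun h => lt_of_le_of_ne hr h⟩
      by_cases hri : r = i
      · subst hri
        by_cases hj : r = j <;> simp [hr, e, hj] <;> omega
      · simp [hr, hri, e]
    · have : ¬ r < j := fun h => hr h.le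
      have hri : r ≠ i := fun h => hr (h ▸ hij)
      simp [hr, this, hri]

/-- For every `k ≥ 1`: for `p_i ≺ p_j` the local v-number of `H_P^k` at `(x_i, y_j)` equals
`|P|·k + |{p_ℓ : p_i ≺ p_ℓ ≺ p_j}|`, and at `(x_i, y_i)` it equals `|P|·k - 1`. -/
theorem stmt18 (P : Type*) [Fintype P] [DecidableEq P] [PartialOrder P]
    (k : ℕ) (hk : 1 ≤ k) :
    (∀ i j : P, i < j →
      vNumberAt K ((HibiIdeal K P) ^ k)
        (Ideal.span {(X (Sum.inl i) : MvPolynomial (P ⊕ P) K), X (Sum.inr j)}) =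
        Fintype.card P * k + Set.ncard {l : P | i < l ∧ l < j}) ∧
    (∀ i : P,
      vNumberAt K ((HibiIdeal K P) ^ k)
        (Ideal.span {(X (Sum.inl i) : MvPolynomial (P ⊕ P) K), X (Sum.inr i)}) =
        Fintype.card P * k - 1) := by
  classical
  have eval : ∀ i j : P, i ≤ j → ∀ N : ℕ,
      (∀ a b : P → ℕ, a i + b j + 1 = k →
        (∀ r s, r ≤ s → ¬ (r = i ∧ s = j) → k ≤ a r + b s) → N ≤ ∑ p, (a p + b p)) →
      (N + 1 = Fintype.card P * k + (Finset.univ.filter fun r => i ≤ r ∧ r < j).card) →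
      vNumberAt K ((HibiIdeal K P) ^ k)
        (Ideal.span {(X (Sum.inl i) : MvPolynomial (P ⊕ P) K), X (Sum.inr j)}) = N := by
    intro i j hij N hN hN'
    obtain ⟨a, b, h1, h2, h3⟩ := good_exp k hk i j hij
    have hsum : ∑ p, (a p + b p) = N := by
      have := Finset.sum_congr (rfl : (Finset.univ : Finset P) = _) fun r _ => h3 r
      rw [Finset.sum_add_distrib, Finset.sum_add_distrib (f := fun _ => k)] at this
      simp at this
      omega
    obtain ⟨f, hf, hc⟩ := colon_mono K k i j hij a b h1 h2
    rw [hsum] at hf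
    apply le_antisymm
    · exact Nat.sInf_le ⟨f, hf, hc⟩
    · refine le_csInf ⟨N, f, hf, hc⟩ ?_
      rintro d ⟨g, hg, hgc⟩
      obtain ⟨a, b, hs, h1, h2⟩ := exists_mono K k d i j g hg hgc
      rw [← hs]
      exact hN a b h1 h2
  refine ⟨fun i j hij => ?_, fun i => ?_⟩
  · have hcard : Set.ncard {l : P | i < l ∧ l < j} =
        (Finset.univ.filter fun l => i < l ∧ l < j).card := by
      rw [← Set.ncard_coe_finset]; simp
    have hins : (Finset.univ.filter fun r => i ≤ r ∧ r < j) =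
        insert i (Finset.univ.filter fun l => i < l ∧ l < j) := by
      ext r
      simp only [Finset.mem_filter, Finset.mem_univ, true_and, Finset.mem_insert]
      constructor
      · rintro ⟨h1, h2⟩
        rcases h1.eq_or_lt with h | h
        · exact Or.inl h.symm
        · exact Or.inr ⟨h, h2⟩
      · rintro (rfl | ⟨h1, h2⟩)
        · exact ⟨le_rfl, hij⟩
        · exact ⟨h1.le, h2⟩
    rw [hcard]
    apply eval i j hij.le
    · intro a b h1 h2
      have : ∑ p : P, (k + if i < p ∧ p < j then 1 else 0) ≤ ∑ p, (a p + b p) := by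
        apply Finset.sum_le_sum
        intro p _
        have h0 := h2 p p le_rfl (by rintro ⟨rfl, rfl⟩; exact lt_irrefl _ hij)
        split_ifs with hp
        · have := h2 i p hp.1.le (fun h => hp.2.ne h.2)
          have := h2 p j hp.2.le (fun h => hp.1.ne' h.1)
          omega
        · simpa using h0
      rw [Finset.sum_add_distrib] at this
      simpa using this
    · rw [hins, Finset.card_insert_of_notMem (by simp)]; omega
  · have hpos : 1 ≤ Fintype.card P * k :=
      Nat.mul_pos (Fintype.card_pos_iff.2 ⟨i⟩) hk
    apply eval i i le_rfl
    · intro a b h1 h2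
      have : ∑ p : P, k ≤ ∑ p, ((a p + b p) + if p = i then 1 else 0) := by
        apply Finset.sum_le_sum
        intro p _
        split_ifs with hp
        · subst hp; omega
        · have := h2 p p le_rfl (fun h => hp h.1)
          omega
      rw [Finset.sum_add_distrib] at this
      simp at this
      omega
    · have : (Finset.univ.filter fun r => i ≤ r ∧ r < i) = ∅ := by
        ext r
        simp only [Finset.mem_filter, Finset.mem_univ, true_and, Finset.notMem_empty, iff_false]
        rintro ⟨h1, h2⟩
        exact absurd h2 (not_lt_of_ge h1)
      rw [this]; simp; omega

end
end
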